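/- arXiv:1503.00989 — 2 statements merged into one kernel-verified Lean document; each statement's English description precedes it below -/
import Mathlib

section
/- The category Enc of enclosures has no terminal object; moreover, there exist enclosures E₁ and E₂ whose binary product does not exist in Enc. -/
open scoped BigOperators

/-- The standard Cartan plane of type A₂: `{x ∈ ℝ³ : x₁ + x₂ + x₃ = 0}`. -/
abbrev Cartan : Type := {x : Fin 3 → ℝ // ∑ i, x i = 0}

/-- The root half-space `{x : xᵢ − xⱼ ≥ c}`. -/
def RootHalfSpace (i j : Fin 3) (c : ℝ) : Set Cartan := {x | c ≤ x.1 i - x.1 j}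

/-- The root hyperplane `{x : xᵢ − xⱼ = c}`. -/
def RootHyperplane (i j : Fin 3) (c : ℝ) : Set Cartan := {x | x.1 i - x.1 j = c}

/-- An enclosure: a bounded subset of the Cartan plane which is an intersection of
finitely many root half-spaces. -/
def IsEnclosure (E : Set Cartan) : Prop :=
  Bornology.IsBounded E ∧
  ∃ s : Finset (Fin 3 × Fin 3 × ℝ),
    (∀ p ∈ s, p.1 ≠ p.2.1) ∧
    E = ⋂ p ∈ s, RootHalfSpace p.1 p.2.1 p.2.2

/-- An element of the affine Weyl group: `x ↦ σ·x + v` with `σ ∈ S₃` permuting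
coordinates and `v` in the Cartan plane. -/
def IsAffWeyl (g : Cartan → Cartan) : Prop :=
  ∃ (σ : Equiv.Perm (Fin 3)) (v : Cartan),
    ∀ (x : Cartan) (i : Fin 3), (g x).1 i = x.1 (σ i) + v.1 i

theorem isAffWeyl_id : IsAffWeyl (fun x => x) := by
  refine ⟨Equiv.refl _, ⟨fun _ => 0, by simp⟩, ?_⟩
  intro x i
  simp

theorem IsAffWeyl.comp {g₂ g₁ : Cartan → Cartan} (h₂ : IsAffWeyl g₂) (h₁ : IsAffWeyl g₁) :
    IsAffWeyl (fun x => g₂ (g₁ x)) := by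
  obtain ⟨σ₂, v₂, hh₂⟩ := h₂
  obtain ⟨σ₁, v₁, hh₁⟩ := h₁
  refine ⟨σ₂.trans σ₁, ⟨fun i => v₁.1 (σ₂ i) + v₂.1 i, ?_⟩, ?_⟩
  · rw [Finset.sum_add_distrib, Equiv.sum_comp σ₂ v₁.1, v₁.2, v₂.2, add_zero]
  · intro x i
    rw [hh₂, hh₁]
    simp [Equiv.trans_apply]
    ring

open CategoryTheory

/-- The category `Enc` of enclosures. -/
structure Enc : Type where
  /-- the underlying subset of the Cartan plane -/
  carrier : Set Cartan
  isEnclosure : IsEnclosure carrier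

/-- Morphisms of enclosures are restrictions of affine Weyl group elements. -/
instance : Category Enc where
  Hom E F := {f : E.carrier → F.carrier //
    ∃ g : Cartan → Cartan, IsAffWeyl g ∧ ∀ x : E.carrier, (f x : Cartan) = g x}
  id E := ⟨fun x => x, ⟨fun y => y, isAffWeyl_id, fun _ => rfl⟩⟩
  comp {E F G} f g := ⟨fun x => g.1 (f.1 x), by
    obtain ⟨gf, hgf, hf⟩ := f.2
    obtain ⟨gg, hgg, hg⟩ := g.2
    exact ⟨fun x => gg (gf x), hgg.comp hgf, fun x => by rw [hg, hf]⟩⟩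

open CategoryTheory.Limits

/-! Every morphism of `Enc` is injective, hence monic, while a point of an enclosure `E` is the same
thing as a morphism to `E` from a one-point enclosure. A terminal object would thus make every
enclosure subterminal, that is, leave it at most one point; and since the projection `E ⨯ F ⟶ E` is
monic, all morphisms to `F` from an object mapping to `E` would coincide. Both fail as soon as
enclosures with two points are involved. -/

theorem subsingleton_hom_of_mono_prod_fst {C : Type*} [Category C] {X Y Z : C}
    [HasBinaryProduct Y Z] [Mono (prod.fst : Y ⨯ Z ⟶ Y)] (f : X ⟶ Y) : Subsingleton (X ⟶ Z) where
  allEq g h := by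
    have lift_eq : prod.lift f g = prod.lift f h := by
      rw [← cancel_mono (prod.fst : Y ⨯ Z ⟶ Y), prod.lift_fst, prod.lift_fst]
    rw [← prod.lift_snd f g, lift_eq, prod.lift_snd]

theorem IsAffWeyl.injective {g : Cartan → Cartan} (hg : IsAffWeyl g) : Function.Injective g := by
  obtain ⟨σ, v, hg⟩ := hg
  intro x y hxy
  ext i
  have coord_eq : x.1 (σ (σ.symm i)) + v.1 (σ.symm i) = y.1 (σ (σ.symm i)) + v.1 (σ.symm i) := by
    rw [← hg, ← hg, hxy]
  simpa only [Equiv.apply_symm_apply, add_left_inj] using coord_eq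

namespace Cartan

/-- The origin of the Cartan plane, named because the bare subtype `Cartan` has no `0`. -/
def origin : Cartan := ⟨0, Finset.sum_const_zero⟩

/-- The translation `x ↦ x + v` of the Cartan plane. -/
def translate (v x : Cartan) : Cartan :=
  ⟨x.1 + v.1, by simp only [Pi.add_apply, Finset.sum_add_distrib, x.2, v.2, add_zero]⟩

theorem isAffWeyl_translate (v : Cartan) : IsAffWeyl (translate v) :=
  ⟨Equiv.refl _, v, fun _ _ => rfl⟩

theorem translate_origin (v : Cartan) : translate v origin = v :=
  Subtype.ext (zero_add v.1)

/-- The regular hexagon centred at the origin on which all roots take values at least `-r`; it is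
reduced to the origin for `r = 0` and empty for `r < 0`. -/
def hexagon (r : ℝ) : Set Cartan := {x | ∀ i j, i ≠ j → -r ≤ x.1 i - x.1 j}

theorem origin_mem_hexagon {r : ℝ} (hr : 0 ≤ r) : origin ∈ hexagon r := fun i j _ => by
  simpa [origin] using hr

theorem abs_apply_le_of_mem_hexagon {r : ℝ} {x : Cartan} (hx : x ∈ hexagon r) (i : Fin 3) :
    |x.1 i| ≤ 2 * r / 3 := by
  have sum_eq : x.1 0 + x.1 1 + x.1 2 = 0 := by rw [← Fin.sum_univ_three, x.2]
  have h01 := hx 0 1 (by decide)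
  have h10 := hx 1 0 (by decide)
  have h02 := hx 0 2 (by decide)
  have h20 := hx 2 0 (by decide)
  have h12 := hx 1 2 (by decide)
  have h21 := hx 2 1 (by decide)
  rw [abs_le]
  fin_cases i <;> constructor <;> dsimp only [Fin.reduceFinMk] <;> linarith

theorem isBounded_hexagon (r : ℝ) : Bornology.IsBounded (hexagon r) := by
  rw [← Bornology.isBounded_image_subtype_val, ← Bornology.forall_isBounded_image_eval_iff]
  intro i
  refine (Metric.isBounded_Icc (-(2 * r / 3)) (2 * r / 3)).subset ?_
  rintro _ ⟨_, ⟨x, hx, rfl⟩, rfl⟩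
  exact abs_le.mp (abs_apply_le_of_mem_hexagon hx i)

theorem isEnclosure_hexagon (r : ℝ) : IsEnclosure (hexagon r) := by
  classical
  refine ⟨isBounded_hexagon r, Finset.univ.offDiag.image fun p => (p.1, p.2, -r), ?_, ?_⟩
  · exact Finset.forall_mem_image.mpr fun p hp => (Finset.mem_offDiag.mp hp).2.2
  · ext x
    simp only [hexagon, RootHalfSpace, Set.mem_iInter₂, Set.mem_ofPred_eq, Finset.forall_mem_image,
      Finset.mem_offDiag, Finset.mem_univ, true_and, Prod.forall]

theorem hexagon_zero : hexagon 0 = {origin} := by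
  refine Set.Subset.antisymm (fun x hx => ?_)
    (Set.singleton_subset_iff.mpr (origin_mem_hexagon le_rfl))
  ext i
  simpa [origin] using abs_apply_le_of_mem_hexagon hx i

theorem nontrivial_hexagon {r : ℝ} (hr : 0 < r) : (hexagon r).Nontrivial := by
  let x : Cartan := ⟨![r / 2, -(r / 2), 0], by simp [Fin.sum_univ_three]⟩
  have abs_apply_le (i : Fin 3) : |x.1 i| ≤ r / 2 := by
    have hr2 : 0 < r / 2 := half_pos hr
    fin_cases i <;> simp [x, abs_of_pos hr2, hr2.le]
  have x_mem : x ∈ hexagon r := fun i j _ => by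
    linarith [neg_le_of_abs_le (abs_apply_le i), le_of_abs_le (abs_apply_le j)]
  refine ⟨x, x_mem, origin, origin_mem_hexagon hr.le, fun x_eq => ?_⟩
  have : r / 2 = 0 := congrFun (congrArg Subtype.val x_eq) 0
  linarith

theorem isEnclosure_singleton_origin : IsEnclosure {origin} :=
  hexagon_zero ▸ isEnclosure_hexagon 0

end Cartan

namespace Enc

open Cartan

theorem hom_injective {E F : Enc} (f : E ⟶ F) : Function.Injective f.1 := by
  obtain ⟨g, hg, hfg⟩ := f.2
  intro x y hxy
  have image_eq : g x = g y := by rw [← hfg, ← hfg, hxy]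
  exact Subtype.ext (hg.injective image_eq)

instance mono {E F : Enc} (f : E ⟶ F) : Mono f where
  right_cancellation _ _ hab :=
    Subtype.ext (funext fun x => hom_injective f (congrFun (congrArg Subtype.val hab) x))

/-- The enclosure consisting of the origin alone; morphisms from it are the points of their
target. -/
def point : Enc := ⟨{origin}, isEnclosure_singleton_origin⟩

/-- The morphism from the one-point enclosure that picks out a given point of `E`. -/
def homOfMem {E : Enc} (x : E.carrier) : point ⟶ E :=
  ⟨fun _ => x, translate x, isAffWeyl_translate x, fun p => by
    rw [Set.mem_singleton_iff.mp p.2, translate_origin]⟩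

theorem homOfMem_injective (E : Enc) : Function.Injective (homOfMem (E := E)) := fun _ _ h =>
  congrFun (congrArg Subtype.val h) ⟨origin, rfl⟩

theorem subsingleton_carrier_of_subsingleton_hom {E : Enc} [Subsingleton (point ⟶ E)] :
    E.carrier.Subsingleton :=
  (Set.subsingleton_coe _).mp (homOfMem_injective E).subsingleton

theorem subsingleton_carrier_of_hasTerminal [HasTerminal Enc] (E : Enc) :
    E.carrier.Subsingleton :=
  have : Subsingleton (point ⟶ E) := ⟨isSubterminal_of_mono_terminal_from (A := E) (Z := point)⟩
  subsingleton_carrier_of_subsingleton_hom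

theorem subsingleton_carrier_of_hasBinaryProduct {E F : Enc} [HasBinaryProduct E F]
    (hE : E.carrier.Nonempty) : F.carrier.Subsingleton :=
  have : Subsingleton (point ⟶ F) := subsingleton_hom_of_mono_prod_fst (homOfMem ⟨_, hE.some_mem⟩)
  subsingleton_carrier_of_subsingleton_hom

end Enc

/-- The category `Enc` has no terminal object, and there exist enclosures
`E₁`, `E₂` whose binary product does not exist in `Enc`. -/
theorem enc_no_terminal_no_products :
    (¬ HasTerminal Enc) ∧ ∃ E₁ E₂ : Enc, ¬ HasBinaryProduct E₁ E₂ := by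
  let H : Enc := ⟨Cartan.hexagon 1, Cartan.isEnclosure_hexagon 1⟩
  have nontrivial_H : H.carrier.Nontrivial := Cartan.nontrivial_hexagon one_pos
  refine ⟨fun _ => ?_, H, H, fun _ => ?_⟩
  · exact nontrivial_H.not_subsingleton (Enc.subsingleton_carrier_of_hasTerminal H)
  · exact nontrivial_H.not_subsingleton
      (Enc.subsingleton_carrier_of_hasBinaryProduct nontrivial_H.nonempty)
end

section
/- Declaring a sieve S on an enclosure E to be a covering sieve if and only if S contains a finite family of morphisms Eᵢ → E in Enc whose images cover E defines a Grothendieck topology on the category Enc. -/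
open scoped BigOperators

open CategoryTheory

/-- A sieve on an enclosure `E` contains a covering: a finite family of morphisms
`Eᵢ → E` in `Enc`, belonging to the sieve, whose images cover `E`. -/
def ContainsCovering (E : Enc) (S : CategoryTheory.Sieve E) : Prop :=
  ∃ (n : ℕ) (F : Fin n → Enc) (f : ∀ i, F i ⟶ E),
    (∀ i, S.arrows (f i)) ∧ ∀ x : E.carrier, ∃ (i : Fin n) (y : (F i).carrier), (f i).1 y = x

/-!
Elements of the affine Weyl group are invertible and carry root half-spaces to root half-spaces.
Hence the set-theoretic fibre product of two morphisms `a : A ⟶ C` and `b : B ⟶ C`, viewed inside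
`A` as `A ∩ a⁻¹(b B)`, is again an enclosure: `Enc` has pullbacks, and they are computed in sets.
In any category with pullbacks computed in sets, the finite jointly surjective families form a
pretopology.
-/

open Limits

section FiniteJointlySurjective

variable {C : Type*} [Category* C]

theorem presieve_mem_finite_iff {X : C} {R : Presieve X} :
    R ∈ Precoverage.finite C X ↔
      ∃ (n : ℕ) (Y : Fin n → C) (f : ∀ i, Y i ⟶ X), R = Presieve.ofArrows Y f := by
  refine ⟨fun hR ↦ ?_, ?_⟩
  · obtain ⟨n, φ, -, hφ⟩ := Set.Finite.fin_param hR
    refine ⟨n, fun i ↦ (φ i).1, fun i ↦ (φ i).2, ?_⟩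
    refine le_antisymm (fun Y g hg ↦ ?_) (Presieve.ofArrows_le_iff.2 fun i ↦ ?_)
    · obtain ⟨i, hi⟩ : ⟨Y, g⟩ ∈ Set.range φ := hφ ▸ hg
      obtain rfl : (φ i).1 = Y := congrArg Sigma.fst hi
      obtain rfl : (φ i).2 = g := eq_of_heq (Sigma.ext_iff.1 hi).2
      exact ⟨i⟩
    · exact hφ.subset ⟨i, rfl⟩
  · rintro ⟨n, Y, f, rfl⟩
    exact Precoverage.ofArrows_mem_finite Y f

variable [HasPullbacks C] (F : C ⥤ Type*) [PreservesLimitsOfShape WalkingCospan F]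

/-- The pretopology of finite families that become jointly surjective under a functor `F` to types,
where `F` is typically a forgetful functor. -/
noncomputable def finiteJointlySurjectivePretopology : Pretopology C :=
  Pretopology.finite C ⊓ (Types.jointlySurjectivePrecoverage.comap F).toPretopology

theorem mem_toGrothendieck_finiteJointlySurjectivePretopology_iff {X : C} {S : Sieve X} :
    S ∈ (finiteJointlySurjectivePretopology F).toGrothendieck X ↔
      ∃ (n : ℕ) (Y : Fin n → C) (f : ∀ i, Y i ⟶ X),
        (∀ i, S (f i)) ∧ ∀ x : F.obj X, ∃ (i : Fin n) (y : F.obj (Y i)), F.map (f i) y = x := by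
  constructor
  · rintro ⟨R, ⟨hfin, hsurj⟩, hRS⟩
    obtain ⟨n, Y, f, rfl⟩ := presieve_mem_finite_iff.1 hfin
    exact ⟨n, Y, f, Presieve.ofArrows_le_iff.1 hRS,
      (Presieve.ofArrows_mem_comap_jointlySurjectivePrecoverage_iff F).1 hsurj⟩
  · rintro ⟨n, Y, f, hfS, hsurj⟩
    exact ⟨Presieve.ofArrows Y f, ⟨Precoverage.ofArrows_mem_finite Y f,
      (Presieve.ofArrows_mem_comap_jointlySurjectivePrecoverage_iff F).2 hsurj⟩,
      Presieve.ofArrows_le_iff.2 hfS⟩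

end FiniteJointlySurjective

namespace IsAffWeyl

theorem isometry {g : Cartan → Cartan} (hg : IsAffWeyl g) : Isometry g := by
  obtain ⟨σ, v, hg⟩ := hg
  have hcoord : ∀ x, (g x).1 = x.1 ∘ σ + v.1 := fun x ↦ funext (hg x)
  refine Isometry.of_dist_eq fun x y ↦ ?_
  rw [Subtype.dist_eq, hcoord, hcoord, dist_add_right]
  exact (IsometryEquiv.piCongrLeft' σ.symm).dist_eq x.1 y.1

theorem exists_inverse {g : Cartan → Cartan} (hg : IsAffWeyl g) :
    ∃ g' : Cartan → Cartan, IsAffWeyl g' ∧ Function.LeftInverse g' g ∧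
      Function.RightInverse g' g := by
  obtain ⟨σ, v, hg⟩ := hg
  let w : Cartan := ⟨fun i ↦ -v.1 (σ.symm i), by
    rw [Equiv.sum_comp σ.symm fun i ↦ -v.1 i, Finset.sum_neg_distrib, v.2, neg_zero]⟩
  refine ⟨fun x ↦ ⟨fun i ↦ x.1 (σ.symm i) + w.1 i, ?_⟩, ⟨σ.symm, w, fun _ _ ↦ rfl⟩, ?_, ?_⟩
  · rw [Finset.sum_add_distrib, Equiv.sum_comp σ.symm x.1, x.2, w.2, add_zero]
  · intro x
    ext i
    simp [hg, w]
  · intro x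
    ext i
    simp [hg, w]

end IsAffWeyl

theorem preimage_rootHalfSpace {g : Cartan → Cartan} {σ : Equiv.Perm (Fin 3)} {v : Cartan}
    (hg : ∀ x i, (g x).1 i = x.1 (σ i) + v.1 i) (i j : Fin 3) (c : ℝ) :
    g ⁻¹' RootHalfSpace i j c = RootHalfSpace (σ i) (σ j) (c - v.1 i + v.1 j) := by
  ext x
  simp only [RootHalfSpace, Set.mem_preimage, Set.mem_ofPred_eq, hg]
  constructor <;> intro h <;> linarith

namespace IsEnclosure

theorem inter {A B : Set Cartan} (hA : IsEnclosure A) (hB : IsEnclosure B) :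
    IsEnclosure (A ∩ B) := by
  classical
  obtain ⟨hbdd, s, hs, rfl⟩ := hA
  obtain ⟨-, t, ht, rfl⟩ := hB
  refine ⟨hbdd.subset Set.inter_subset_left, s ∪ t, ?_, (Finset.set_biInter_inter s t _).symm⟩
  exact fun p hp ↦ (Finset.mem_union.1 hp).elim (hs p) (ht p)

theorem preimage {A : Set Cartan} (hA : IsEnclosure A) {g : Cartan → Cartan} (hg : IsAffWeyl g) :
    IsEnclosure (g ⁻¹' A) := by
  classical
  have hbdd := hg.isometry.antilipschitz.isBounded_preimage hA.1
  obtain ⟨-, s, hs, rfl⟩ := hA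
  obtain ⟨σ, v, hg⟩ := hg
  refine ⟨hbdd, s.image fun p ↦ (σ p.1, σ p.2.1, p.2.2 - v.1 p.1 + v.1 p.2.1), ?_, ?_⟩
  · exact Finset.forall_mem_image.2 fun p hp ↦ σ.injective.ne (hs p hp)
  · simp only [Set.preimage_iInter, preimage_rootHalfSpace hg, Finset.set_biInter_finset_image]

end IsEnclosure

namespace Enc

/-- The forgetful functor from enclosures to sets. -/
def forget : Enc ⥤ Type where
  obj E := E.carrier
  map f := TypeCat.ofHom f.1

theorem hom_ext {A B : Enc} {f g : A ⟶ B} (h : ∀ x, (f.1 x : Cartan) = g.1 x) : f = g :=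
  Subtype.ext (funext fun x ↦ Subtype.ext (h x))

/-- The morphism of enclosures obtained by restricting an element of the affine Weyl group. -/
def homOfMapsTo {A B : Enc} {g : Cartan → Cartan} (hg : IsAffWeyl g)
    (hAB : Set.MapsTo g A.carrier B.carrier) : A ⟶ B :=
  ⟨hAB.restrict, g, hg, fun _ ↦ rfl⟩

theorem exists_eq_homOfMapsTo {A B : Enc} (f : A ⟶ B) :
    ∃ (g : Cartan → Cartan) (hg : IsAffWeyl g) (hAB : Set.MapsTo g A.carrier B.carrier),
      f = homOfMapsTo hg hAB := by
  obtain ⟨f, g, hg, hfg⟩ := f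
  exact ⟨g, hg, fun x hx ↦ hfg ⟨x, hx⟩ ▸ (f ⟨x, hx⟩).2, hom_ext hfg⟩

theorem exists_isPullback {A B C : Enc} (f : A ⟶ C) (g : B ⟶ C) :
    ∃ (P : Enc) (fst : P ⟶ A) (snd : P ⟶ B), IsPullback fst snd f g ∧
      IsPullback (forget.map fst) (forget.map snd) (forget.map f) (forget.map g) := by
  obtain ⟨a, ha, hAC, rfl⟩ := exists_eq_homOfMapsTo f
  obtain ⟨b, hb, hBC, rfl⟩ := exists_eq_homOfMapsTo g
  obtain ⟨b', hb', hleft, hright⟩ := hb.exists_inverse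
  let P : Enc := ⟨A.carrier ∩ (fun x ↦ b' (a x)) ⁻¹' B.carrier,
    A.isEnclosure.inter (B.isEnclosure.preimage (hb'.comp ha))⟩
  let fst : P ⟶ A := homOfMapsTo isAffWeyl_id fun _ hx ↦ hx.1
  let snd : P ⟶ B := homOfMapsTo (hb'.comp ha) fun _ hx ↦ hx.2
  have hw : fst ≫ homOfMapsTo ha hAC = snd ≫ homOfMapsTo hb hBC :=
    hom_ext fun x ↦ (hright (a x)).symm
  have hfst : Function.Injective fst.1 := fun x y h ↦ Subtype.ext congr(($h : Cartan))
  have eq_of_image_eq : ∀ {x y : Cartan}, a x = b y → b' (a x) = y := fun {_ y} h ↦ h ▸ hleft y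
  refine ⟨P, fst, snd, .mk' hw (fun T φ ψ h _ ↦ ?_) fun T u v huv ↦ ?_, ?_⟩
  · exact Subtype.ext (hfst.comp_left congr(($h).1))
  · obtain ⟨c, hc, hTA, rfl⟩ := exists_eq_homOfMapsTo u
    have hv (t : T.carrier) : b' (a (c t)) = v.1 t := eq_of_image_eq congr((($huv).1 t : Cartan))
    have hTP : Set.MapsTo c T.carrier P.carrier :=
      fun t ht ↦ ⟨hTA ht, Set.mem_preimage.2 (hv ⟨t, ht⟩ ▸ (v.1 ⟨t, ht⟩).2)⟩
    exact ⟨homOfMapsTo hc hTP, rfl, hom_ext hv⟩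
  · refine (Types.isPullback_iff _ _ _ _).2 ⟨congr(forget.map $hw), fun x y h ↦ hfst h.1, ?_⟩
    rintro (x : A.carrier) (y : B.carrier) hxy
    have hy : b' (a x) = y := eq_of_image_eq (congrArg Subtype.val hxy)
    exact ⟨⟨x, x.2, Set.mem_preimage.2 (hy ▸ y.2)⟩, rfl, Subtype.ext hy⟩

instance : HasPullbacks Enc :=
  have (A B C : Enc) (f : A ⟶ C) (g : B ⟶ C) : HasPullback f g :=
    let ⟨_, _, _, h, _⟩ := exists_isPullback f g
    h.hasPullback
  hasPullbacks_of_hasLimit_cospan Enc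

instance : PreservesLimitsOfShape WalkingCospan forget :=
  preservesLimitsOfShape_walkingCospan_of_forall_isPullback fun _ _ _ f g _ ↦ exists_isPullback f g

end Enc

/-- Declaring a sieve on an enclosure `E` to be a covering sieve iff it
contains a finite family of morphisms `Eᵢ → E` in `Enc` whose images cover `E` defines a
Grothendieck topology on `Enc`. -/
theorem enc_grothendieckTopology :
    ∃ J : CategoryTheory.GrothendieckTopology Enc,
      ∀ (E : Enc) (S : CategoryTheory.Sieve E), S ∈ J.sieves E ↔ ContainsCovering E S := by
  exact ⟨(finiteJointlySurjectivePretopology Enc.forget).toGrothendieck,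
    fun _ _ ↦ mem_toGrothendieck_finiteJointlySurjectivePretopology_iff Enc.forget⟩
end
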